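/- Let G := Σ_{k=0}^{∞} (−1)^k/(2k+1)² (Catalan's constant). Then (96/π²) · ∫₀^{π/2} ∫₀^{π/2} ∫₀^{π/2} [ √(cos²φ · sin²ψ + cos²ψ) + sin ψ · √(sin²θ · sin²φ + cos²φ) ] · sin ψ · sin φ · sin²ψ dψ dφ dθ = 3(5 + 2G)/π + 9π/4. (This is the joint moment E(ar·mw) of the surface area and mean width of the projection of a unit 4-cube onto a uniformly random 3-subspace of ℝ⁴.) -/

import Mathlib

open Real

/-!
The integrand splits as `√(1 - (sin φ sin ψ)²) sin φ sin³ψ + √(1 - (sin φ cos θ)²) sin φ sin⁴ψ`.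

In the second term the `ψ`-integral separates. By Archimedes' hat-box theorem a coordinate of a
uniform point of the 2-sphere is uniformly distributed (on monomials this is Wallis' product, and
polynomials suffice by Weierstrass), so the remaining octant integral is `π/2` times the area
under a quarter circle.

In the first term, integrate out `φ` and put `x = π/2 - ψ`. What remains beyond elementary terms is
`∫ sin² x cos² x arsinh (cot x)` over `[0, π/2]`. Since `d/dx arsinh (cot x) = -1 / sin x`,
integration by parts reduces it to `∫ x / sin x`, which is `2G` by the substitution
`x = 2 arctan t` and the power series of `arctan t / t`.
-/

/-! ### Iterated integrals and substitutions -/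

theorem intervalIntegral_swap_of_continuous {E : Type*} [NormedAddCommGroup E] [NormedSpace ℝ E]
    {f : ℝ → ℝ → E} (hf : Continuous f.uncurry) (a b c d : ℝ) :
    ∫ x in a..b, ∫ y in c..d, f x y = ∫ y in c..d, ∫ x in a..b, f x y := by
  have hint : MeasureTheory.Integrable f.uncurry
      ((MeasureTheory.volume.restrict (Set.uIoc a b)).prod
        (MeasureTheory.volume.restrict (Set.uIoc c d))) := by
    rw [MeasureTheory.Measure.prod_restrict]
    exact (hf.continuousOn.integrableOn_compact (isCompact_uIcc.prod isCompact_uIcc)).mono_set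
      (Set.prod_mono Set.uIoc_subset_uIcc Set.uIoc_subset_uIcc)
  simp only [intervalIntegral.intervalIntegral_eq_integral_uIoc, MeasureTheory.integral_smul]
  rw [smul_comm, MeasureTheory.integral_integral_swap hint]

theorem integral_integral_integral_add_mul {f g : ℝ → ℝ → ℝ} {h : ℝ → ℝ}
    (hf : Continuous f.uncurry) (hg : Continuous g.uncurry) (hh : Continuous h)
    (a₁ b₁ a₂ b₂ a₃ b₃ : ℝ) :
    ∫ x in a₁..b₁, ∫ y in a₂..b₂, ∫ z in a₃..b₃, (f y z + g x y * h z) =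
      (b₁ - a₁) * (∫ y in a₂..b₂, ∫ z in a₃..b₃, f y z) +
        (∫ x in a₁..b₁, ∫ y in a₂..b₂, g x y) * ∫ z in a₃..b₃, h z := by
  have hz (x y : ℝ) : ∫ z in a₃..b₃, (f y z + g x y * h z) =
      (∫ z in a₃..b₃, f y z) + g x y * ∫ z in a₃..b₃, h z := by
    rw [intervalIntegral.integral_add, intervalIntegral.integral_const_mul] <;>
      apply Continuous.intervalIntegrable <;> fun_prop
  have hy (x : ℝ) : ∫ y in a₂..b₂, ((∫ z in a₃..b₃, f y z) + g x y * ∫ z in a₃..b₃, h z) =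
      (∫ y in a₂..b₂, ∫ z in a₃..b₃, f y z) +
        (∫ y in a₂..b₂, g x y) * ∫ z in a₃..b₃, h z := by
    rw [intervalIntegral.integral_add, intervalIntegral.integral_mul_const] <;>
      apply Continuous.intervalIntegrable <;> fun_prop
  simp only [hz, hy]
  rw [intervalIntegral.integral_add, intervalIntegral.integral_mul_const,
    intervalIntegral.integral_const, smul_eq_mul] <;>
    apply Continuous.intervalIntegrable <;> fun_prop

theorem integral_comp_pi_div_two_sub {E : Type*} [NormedAddCommGroup E] [NormedSpace ℝ E]
    (f : ℝ → E) :
    ∫ x in (0 : ℝ)..(π / 2), f (π / 2 - x) = ∫ x in (0 : ℝ)..(π / 2), f x := by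
  rw [intervalIntegral.integral_comp_sub_left, sub_self, sub_zero]

theorem integral_comp_cos_mul_sin {f : ℝ → ℝ} (hf : Continuous f) (a b : ℝ) :
    ∫ φ in a..b, f (cos φ) * sin φ = ∫ u in cos b..cos a, f u := by
  have hsubst := intervalIntegral.integral_comp_mul_deriv (a := a) (b := b)
    (fun φ _ => hasDerivAt_cos φ) continuousOn_sin.neg hf
  rw [intervalIntegral.integral_symm (cos a), ← hsubst, ← intervalIntegral.integral_neg]
  simp only [Function.comp_apply, mul_neg, neg_neg]

/-! ### Catalan's constant -/

/-- Catalan's constant `G = 1 - 1/3² + 1/5² - ⋯`. -/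
noncomputable def catalanConstant : ℝ :=
  ∑' k : ℕ, (-1 : ℝ) ^ k / (2 * (k : ℝ) + 1) ^ 2

theorem hasSum_arctan_div_self {t : ℝ} (h₀ : t ≠ 0) (h₁ : |t| < 1) :
    HasSum (fun k : ℕ => (-1 : ℝ) ^ k * (t ^ (2 * k) / (2 * k + 1))) (arctan t / t) := by
  refine ((Real.hasSum_arctan h₁).div_const t).congr_fun fun k => ?_
  push_cast
  field_simp
  ring

theorem integral_pow_two_mul_div (k : ℕ) :
    ∫ t in (0 : ℝ)..1, t ^ (2 * k) / (2 * (k : ℝ) + 1) = 1 / (2 * (k : ℝ) + 1) ^ 2 := by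
  rw [intervalIntegral.integral_div, integral_pow]
  push_cast
  field_simp
  simp

theorem summable_one_div_two_mul_add_one_sq :
    Summable fun k : ℕ => 1 / (2 * (k : ℝ) + 1) ^ 2 := by
  have hodd : Function.Injective fun k : ℕ => 2 * k + 1 := fun a b h => by simpa using h
  refine ((Real.summable_one_div_nat_pow.2 one_lt_two).comp_injective hodd).congr fun k => ?_
  simp

theorem integral_arctan_div_self : ∫ t in (0 : ℝ)..1, arctan t / t = catalanConstant := by
  have hsum := MeasureTheory.hasSum_integral_of_summable_integral_norm
    (μ := MeasureTheory.volume.restrict (Set.Ioc (0 : ℝ) 1))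
    (F := fun (k : ℕ) t => (-1 : ℝ) ^ k * (t ^ (2 * k) / (2 * (k : ℝ) + 1)))
    (fun k => Continuous.integrableOn_Ioc (by fun_prop)) (by
      refine summable_one_div_two_mul_add_one_sq.congr fun k => ?_
      rw [← integral_pow_two_mul_div, intervalIntegral.integral_of_le zero_le_one]
      refine MeasureTheory.setIntegral_congr_fun measurableSet_Ioc fun t ht => ?_
      have : 0 ≤ t := ht.1.le
      simp only [norm_mul, norm_pow, norm_neg, norm_one, one_pow, one_mul]
      exact (norm_of_nonneg (by positivity)).symm)
  simp only [← intervalIntegral.integral_of_le zero_le_one, intervalIntegral.integral_const_mul,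
    integral_pow_two_mul_div, mul_one_div] at hsum
  calc ∫ t in (0 : ℝ)..1, arctan t / t
      = ∫ t in (0 : ℝ)..1, ∑' k : ℕ, (-1 : ℝ) ^ k * (t ^ (2 * k) / (2 * (k : ℝ) + 1)) :=
        intervalIntegral.integral_congr_Ioo_of_le zero_le_one fun t ht =>
          (hasSum_arctan_div_self ht.1.ne' (abs_lt.2 ⟨by linarith [ht.1], ht.2⟩)).tsum_eq.symm
    _ = catalanConstant := hsum.tsum_eq.symm

theorem sinc_ne_zero_of_mem_Ioo {x : ℝ} (hx : x ∈ Set.Ioo (-π) π) : sinc x ≠ 0 := by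
  rcases eq_or_ne x 0 with rfl | h
  · simp
  · rw [sinc_of_ne_zero h]
    exact div_ne_zero (mt (sin_eq_zero_iff_of_lt_of_lt hx.1 hx.2).1 h) h

theorem continuousOn_inv_sinc : ContinuousOn (fun x => (sinc x)⁻¹) (Set.Ioo (-π) π) :=
  continuous_sinc.continuousOn.inv₀ fun _ hx => sinc_ne_zero_of_mem_Ioo hx

theorem sin_two_mul_arctan (t : ℝ) : sin (2 * arctan t) = 2 * t / (1 + t ^ 2) := by
  rw [sin_two_mul, sin_arctan, cos_arctan]
  field_simp
  rw [sq_sqrt (by positivity)]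

theorem integral_inv_sinc : ∫ x in (0 : ℝ)..(π / 2), (sinc x)⁻¹ = 2 * catalanConstant := by
  have hsubst := intervalIntegral.integral_comp_mul_deriv' (a := 0) (b := 1)
    (g := fun x => (sinc x)⁻¹) (fun t _ => (hasDerivAt_arctan t).const_mul 2)
    (Continuous.continuousOn (by fun_prop (disch := intro t; positivity)))
    (continuousOn_inv_sinc.mono <| Set.image_subset_iff.2 fun t _ =>
      ⟨by linarith [neg_pi_div_two_lt_arctan t], by linarith [arctan_lt_pi_div_two t]⟩)
  have hb : 2 * arctan 1 = π / 2 := by rw [arctan_one]; ring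
  simp only [arctan_zero, mul_zero, hb] at hsubst
  rw [← hsubst, ← integral_arctan_div_self, ← intervalIntegral.integral_const_mul]
  refine intervalIntegral.integral_congr_Ioo_of_le zero_le_one fun t ht => ?_
  have ht₀ : 0 < t := ht.1
  have harctan : 0 < arctan t := arctan_pos.2 ht₀
  simp only [Function.comp_apply]
  rw [sinc_of_ne_zero (mul_pos two_pos harctan).ne', sin_two_mul_arctan]
  field_simp

/-! ### The moment `∫ sin² x cos² x arsinh (cot x)` -/

theorem sqrt_one_add_cot_sq {x : ℝ} (hx : 0 < sin x) : √(1 + cot x ^ 2) = (sin x)⁻¹ := by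
  rw [← sqrt_sq (inv_pos.2 hx).le, cot_eq_cos_div_sin]
  congr 1
  field_simp
  exact sin_sq_add_cos_sq x

theorem hasDerivAt_arsinh_cot {x : ℝ} (hx : 0 < sin x) :
    HasDerivAt (fun x => arsinh (cot x)) (-(sin x)⁻¹) x := by
  have hcot : HasDerivAt cot (-(sin x ^ 2)⁻¹) x := by
    rw [show cot = fun x => cos x / sin x from funext cot_eq_cos_div_sin]
    refine ((hasDerivAt_cos x).div (hasDerivAt_sin x) hx.ne').congr_deriv ?_
    field_simp
    linarith [sin_sq_add_cos_sq x]
  refine hcot.arsinh.congr_deriv ?_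
  rw [sqrt_one_add_cot_sq hx, smul_eq_mul]
  field_simp

theorem one_add_cos_pos_of_mem_Ico {x : ℝ} (hx : x ∈ Set.Ico 0 π) : 0 < 1 + cos x := by
  have := cos_lt_cos_of_nonneg_of_le_pi hx.1 le_rfl hx.2
  rw [cos_pi] at this
  linarith

theorem sin_mul_arsinh_cot {x : ℝ} (hx : x ∈ Set.Ico 0 π) :
    sin x * arsinh (cot x) = sin x * log (1 + cos x) - sin x * log (sin x) := by
  rcases hx.1.eq_or_lt with rfl | h
  · simp
  · have hs : 0 < sin x := sin_pos_of_pos_of_lt_pi h hx.2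
    rw [arsinh, sqrt_one_add_cot_sq hs, cot_eq_cos_div_sin, ← mul_sub,
      ← log_div (one_add_cos_pos_of_mem_Ico hx).ne' hs.ne']
    congr 2
    ring

theorem continuousOn_sin_mul_arsinh_cot :
    ContinuousOn (fun x => sin x * arsinh (cot x)) (Set.Ico 0 π) := by
  have hc : ∀ x ∈ Set.Ico 0 π, 1 + cos x ≠ 0 := fun x hx => (one_add_cos_pos_of_mem_Ico hx).ne'
  have hlog : ContinuousOn (fun x => sin x * log (1 + cos x) - sin x * log (sin x))
      (Set.Ico 0 π) :=
    (continuousOn_sin.mul (ContinuousOn.log (by fun_prop) hc)).sub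
      (continuous_mul_log.comp continuous_sin).continuousOn
  exact hlog.congr fun x hx => sin_mul_arsinh_cot hx

-- `x / 8 - sin (4 x) / 32` is the primitive of `sin² x cos² x` vanishing at `0`; its factor `sin x`
-- cancels the singularity of `arsinh (cot x)` there.
theorem div_sub_sin_four_mul_div {x : ℝ} (hx : x ∈ Set.Ioo (-π) π) :
    x / 8 - sin (4 * x) / 32 = ((sinc x)⁻¹ - cos x * cos (2 * x)) / 8 * sin x := by
  have hsin : sin (4 * x) = 4 * sin x * cos x * cos (2 * x) := by
    rw [show 4 * x = 2 * (2 * x) by ring, sin_two_mul, sin_two_mul]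
    ring
  have hsinc : (sinc x)⁻¹ * sin x = x := by
    have hne := sinc_ne_zero_of_mem_Ioo hx
    rcases eq_or_ne x 0 with rfl | h
    · simp
    · rw [sinc_of_ne_zero h] at hne ⊢
      have : sin x ≠ 0 := (div_ne_zero_iff.1 hne).1
      field_simp
  linear_combination (-1 / 8) * hsinc - hsin / 32

theorem hasDerivAt_mul_arsinh_cot {x : ℝ} (hx : x ∈ Set.Ioo 0 π) :
    HasDerivAt (fun x => (x / 8 - sin (4 * x) / 32) * arsinh (cot x))
      (sin x ^ 2 * cos x ^ 2 * arsinh (cot x) - ((sinc x)⁻¹ - cos x * cos (2 * x)) / 8) x := by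
  have hs : 0 < sin x := sin_pos_of_mem_Ioo hx
  have hprim : HasDerivAt (fun x => x / 8 - sin (4 * x) / 32) (sin x ^ 2 * cos x ^ 2) x := by
    refine (((hasDerivAt_id x).div_const 8).sub
      ((((hasDerivAt_id x).const_mul 4).sin).div_const 32)).congr_deriv ?_
    rw [id, show 4 * x = 2 * (2 * x) by ring, cos_two_mul, cos_two_mul, sin_sq]
    ring
  refine (hprim.mul (hasDerivAt_arsinh_cot hs)).congr_deriv ?_
  rw [div_sub_sin_four_mul_div ⟨by linarith [hx.1, pi_pos], hx.2⟩]
  field_simp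
  ring

theorem integral_cos_mul_cos_two_mul :
    ∫ x in (0 : ℝ)..(π / 2), cos x * cos (2 * x) = 1 / 3 := by
  rw [intervalIntegral.integral_eq_sub_of_hasDerivAt (f := fun x => sin x - 2 / 3 * sin x ^ 3)]
  · norm_num
  · intro x _
    refine ((hasDerivAt_sin x).sub (((hasDerivAt_sin x).pow 3).const_mul (2 / 3))).congr_deriv ?_
    rw [cos_two_mul, cos_sq']
    push_cast
    ring
  · exact Continuous.intervalIntegrable (by fun_prop) _ _

theorem intervalIntegrable_sin_sq_mul_cos_sq_mul_arsinh_cot :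
    IntervalIntegrable (fun x => sin x ^ 2 * cos x ^ 2 * arsinh (cot x))
      MeasureTheory.volume 0 (π / 2) := by
  have hcont : ContinuousOn (fun x => sin x * cos x ^ 2 * (sin x * arsinh (cot x)))
      (Set.Icc 0 (π / 2)) :=
    ContinuousOn.mul (by fun_prop) <| continuousOn_sin_mul_arsinh_cot.mono
      (Set.Icc_subset_Ico_right (by linarith [pi_pos]))
  refine (hcont.intervalIntegrable_of_Icc (by positivity)).congr fun x _ => ?_
  ring

theorem integral_sin_sq_mul_cos_sq_mul_arsinh_cot :
    ∫ x in (0 : ℝ)..(π / 2), sin x ^ 2 * cos x ^ 2 * arsinh (cot x) =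
      catalanConstant / 4 - 1 / 24 := by
  have hpi : (0 : ℝ) ≤ π / 2 := by positivity
  have hsub : Set.Icc 0 (π / 2) ⊆ Set.Ioo (-π) π := fun x hx =>
    ⟨by linarith [hx.1, pi_pos], by linarith [hx.2, pi_pos]⟩
  have hinv := continuousOn_inv_sinc.mono hsub
  have hquot : ContinuousOn (fun x => ((sinc x)⁻¹ - cos x * cos (2 * x)) / 8)
      (Set.Icc 0 (π / 2)) :=
    (hinv.sub (by fun_prop)).div_const 8
  have hprim : ContinuousOn (fun x => (x / 8 - sin (4 * x) / 32) * arsinh (cot x))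
      (Set.Icc 0 (π / 2)) := by
    refine (hquot.mul (continuousOn_sin_mul_arsinh_cot.mono
      (Set.Icc_subset_Ico_right (by linarith [pi_pos])))).congr fun x hx => ?_
    rw [div_sub_sin_four_mul_div (hsub hx), mul_assoc, Pi.mul_apply]
  have hparts := intervalIntegral.integral_eq_sub_of_hasDerivAt_of_le hpi hprim
    (fun x hx => hasDerivAt_mul_arsinh_cot ⟨hx.1, by linarith [hx.2, pi_pos]⟩)
    (intervalIntegrable_sin_sq_mul_cos_sq_mul_arsinh_cot.sub (hquot.intervalIntegrable_of_Icc hpi))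
  rw [intervalIntegral.integral_sub intervalIntegrable_sin_sq_mul_cos_sq_mul_arsinh_cot
      (hquot.intervalIntegrable_of_Icc hpi), intervalIntegral.integral_div,
    intervalIntegral.integral_sub (hinv.intervalIntegrable_of_Icc hpi)
      (Continuous.intervalIntegrable (by fun_prop) _ _),
    integral_inv_sinc, integral_cos_mul_cos_two_mul] at hparts
  have hboundary : cot (π / 2) = 0 := by rw [cot_eq_cos_div_sin, cos_pi_div_two, zero_div]
  simp only [hboundary, arsinh_zero, mul_zero, sin_zero, zero_div, sub_zero, zero_mul] at hparts
  linarith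

/-! ### The integral over `φ` and `ψ` -/

theorem integral_sqrt_sq_add_sq {c : ℝ} (hc : 0 < c) (a b : ℝ) :
    ∫ x in a..b, √(x ^ 2 + c ^ 2) =
      (b * √(b ^ 2 + c ^ 2) + c ^ 2 * arsinh (b / c)) / 2 -
        (a * √(a ^ 2 + c ^ 2) + c ^ 2 * arsinh (a / c)) / 2 := by
  refine intervalIntegral.integral_eq_sub_of_hasDerivAt
    (f := fun x => (x * √(x ^ 2 + c ^ 2) + c ^ 2 * arsinh (x / c)) / 2) (fun x _ => ?_)
    (Continuous.intervalIntegrable (by fun_prop) _ _)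
  have hpos : 0 < x ^ 2 + c ^ 2 := by positivity
  have hsqrt : HasDerivAt (fun x => √(x ^ 2 + c ^ 2)) (x / √(x ^ 2 + c ^ 2)) x := by
    refine (((hasDerivAt_pow 2 x).add_const (c ^ 2)).sqrt hpos.ne').congr_deriv ?_
    field_simp
    norm_num
  have harsinh : HasDerivAt (fun x => arsinh (x / c)) (√(x ^ 2 + c ^ 2))⁻¹ x := by
    refine ((hasDerivAt_id x).div_const c).arsinh.congr_deriv ?_
    have hscale : 1 + (x / c) ^ 2 = (x ^ 2 + c ^ 2) / c ^ 2 := by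
      field_simp
      ring
    rw [id, hscale, sqrt_div hpos.le, sqrt_sq hc.le, smul_eq_mul]
    field_simp
  refine ((((hasDerivAt_id x).mul hsqrt).add
    (harsinh.const_mul (c ^ 2))).div_const 2).congr_deriv ?_
  have hsq := sq_sqrt hpos.le
  simp only [id]
  field_simp
  linarith

theorem cos_mul_integral_sqrt_mul_sin {x : ℝ} (hx : 0 < sin x) :
    cos x * ∫ φ in (0 : ℝ)..(π / 2), √(cos φ ^ 2 * cos x ^ 2 + sin x ^ 2) * sin φ =
      (cos x + sin x ^ 2 * arsinh (cot x)) / 2 := by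
  calc cos x * ∫ φ in (0 : ℝ)..(π / 2), √(cos φ ^ 2 * cos x ^ 2 + sin x ^ 2) * sin φ
      = cos x * ∫ u in (0 : ℝ)..1, √((cos x * u) ^ 2 + sin x ^ 2) := by
        have hu := integral_comp_cos_mul_sin (f := fun u => √((cos x * u) ^ 2 + sin x ^ 2))
          (by fun_prop) 0 (π / 2)
        simp only [cos_zero, cos_pi_div_two, mul_pow, mul_comm (cos x ^ 2)] at hu ⊢
        rw [hu]
    _ = ∫ v in (0 : ℝ)..(cos x), √(v ^ 2 + sin x ^ 2) := by
        rw [intervalIntegral.mul_integral_comp_mul_left (f := fun v => √(v ^ 2 + sin x ^ 2)),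
          mul_zero, mul_one]
    _ = (cos x + sin x ^ 2 * arsinh (cot x)) / 2 := by
        rw [integral_sqrt_sq_add_sq hx, cos_sq_add_sin_sq, cot_eq_cos_div_sin]
        simp

theorem integral_integral_sqrt_mul_sin_mul_sin_pow_three :
    ∫ φ in (0 : ℝ)..(π / 2), ∫ ψ in (0 : ℝ)..(π / 2),
        √(cos φ ^ 2 * sin ψ ^ 2 + cos ψ ^ 2) * sin φ * sin ψ ^ 3 =
      (5 + 2 * catalanConstant) / 16 := by
  have hinner {x : ℝ} (hx : x ∈ Set.Ioo 0 (π / 2)) :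
      ∫ φ in (0 : ℝ)..(π / 2), √(cos φ ^ 2 * cos x ^ 2 + sin x ^ 2) * sin φ * cos x ^ 3 =
        cos x ^ 3 / 2 + sin x ^ 2 * cos x ^ 2 * arsinh (cot x) / 2 := by
    have hφ := cos_mul_integral_sqrt_mul_sin
      (sin_pos_of_mem_Ioo ⟨hx.1, by linarith [hx.2, pi_pos]⟩)
    rw [intervalIntegral.integral_mul_const]
    linear_combination cos x ^ 2 * hφ
  rw [intervalIntegral_swap_of_continuous (by fun_prop), ← integral_comp_pi_div_two_sub]
  simp only [sin_pi_div_two_sub, cos_pi_div_two_sub]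
  rw [intervalIntegral.integral_congr_Ioo_of_le (by positivity) fun x hx => hinner hx,
    intervalIntegral.integral_add (Continuous.intervalIntegrable (by fun_prop) _ _)
      (intervalIntegrable_sin_sq_mul_cos_sq_mul_arsinh_cot.div_const 2),
    intervalIntegral.integral_div, intervalIntegral.integral_div, integral_cos_pow_three,
    integral_sin_sq_mul_cos_sq_mul_arsinh_cot, sin_pi_div_two, sin_zero]
  ring

/-! ### Archimedes' hat-box theorem -/

theorem integral_cos_pow_eq_integral_sin_pow (n : ℕ) :
    ∫ x in (0 : ℝ)..(π / 2), cos x ^ n = ∫ x in (0 : ℝ)..(π / 2), sin x ^ n := by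
  simpa only [cos_pi_div_two_sub] using
    (integral_comp_pi_div_two_sub fun x => cos x ^ n).symm

theorem integral_sin_pow_succ_mul_integral_sin_pow (n : ℕ) :
    (∫ x in (0 : ℝ)..(π / 2), sin x ^ (n + 1)) * (∫ x in (0 : ℝ)..(π / 2), sin x ^ n) =
      π / 2 / (n + 1) := by
  induction n with
  | zero => simp
  | succ n ih =>
    have hrec : ∫ x in (0 : ℝ)..(π / 2), sin x ^ (n + 2) =
        (n + 1) / (n + 2) * ∫ x in (0 : ℝ)..(π / 2), sin x ^ n := by
      simp [integral_sin_pow]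
    rw [hrec, mul_assoc, mul_comm (∫ x in (0 : ℝ)..(π / 2), sin x ^ n), ih]
    push_cast
    field_simp
    ring

/-- The integral of `f (x)` over the unit-sphere octant `x, y, z ≥ 0` with respect to surface
area, in the spherical coordinates `x = sin φ cos θ`, `y = sin φ sin θ`, `z = cos φ`. -/
noncomputable def octantIntegral (f : ℝ → ℝ) : ℝ :=
  ∫ θ in (0 : ℝ)..(π / 2), ∫ φ in (0 : ℝ)..(π / 2), f (sin φ * cos θ) * sin φ

theorem octantIntegral_add {f g : ℝ → ℝ} (hf : Continuous f) (hg : Continuous g) :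
    octantIntegral (fun x => f x + g x) = octantIntegral f + octantIntegral g := by
  have hφ (θ : ℝ) : ∫ φ in (0 : ℝ)..(π / 2), (f (sin φ * cos θ) + g (sin φ * cos θ)) * sin φ =
      (∫ φ in (0 : ℝ)..(π / 2), f (sin φ * cos θ) * sin φ) +
        ∫ φ in (0 : ℝ)..(π / 2), g (sin φ * cos θ) * sin φ := by
    simp only [add_mul]
    exact intervalIntegral.integral_add (Continuous.intervalIntegrable (by fun_prop) _ _)
      (Continuous.intervalIntegrable (by fun_prop) _ _)
  simp only [octantIntegral, hφ]
  exact intervalIntegral.integral_add (Continuous.intervalIntegrable (by fun_prop) _ _)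
    (Continuous.intervalIntegrable (by fun_prop) _ _)

theorem octantIntegral_sub {f g : ℝ → ℝ} (hf : Continuous f) (hg : Continuous g) :
    octantIntegral (fun x => f x - g x) = octantIntegral f - octantIntegral g := by
  rw [eq_sub_iff_add_eq, ← octantIntegral_add (by fun_prop) hg]
  simp only [sub_add_cancel]

theorem abs_octantIntegral_le {f : ℝ → ℝ} {ε : ℝ} (hf : ∀ x ∈ Set.Icc 0 1, |f x| ≤ ε) :
    |octantIntegral f| ≤ ε * (π / 2) ^ 2 := by
  have hpi : (0 : ℝ) ≤ π / 2 := by positivity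
  have hbound : ‖octantIntegral f‖ ≤ ε * |π / 2 - 0| * |π / 2 - 0| := by
    refine intervalIntegral.norm_integral_le_of_norm_le_const fun θ hθ =>
      intervalIntegral.norm_integral_le_of_norm_le_const fun φ hφ => ?_
    rw [Set.uIoc_of_le hpi] at hθ hφ
    have hs : 0 ≤ sin φ := sin_nonneg_of_nonneg_of_le_pi hφ.1.le (by linarith [hφ.2])
    have hc : 0 ≤ cos θ := cos_nonneg_of_neg_pi_div_two_le_of_le (by linarith [hθ.1]) hθ.2
    have hfx := hf (sin φ * cos θ)
      ⟨mul_nonneg hs hc, mul_le_one₀ (sin_le_one φ) hc (cos_le_one θ)⟩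
    rw [norm_mul, norm_eq_abs, norm_of_nonneg hs]
    exact (mul_le_of_le_one_right (abs_nonneg _) (sin_le_one φ)).trans hfx
  rwa [sub_zero, abs_of_nonneg hpi, mul_assoc, ← sq] at hbound

theorem octantIntegral_polynomial (p : Polynomial ℝ) :
    octantIntegral (fun x => p.eval x) = π / 2 * ∫ x in (0 : ℝ)..1, p.eval x := by
  induction p using Polynomial.induction_on' with
  | add p q hp hq =>
    simp only [Polynomial.eval_add]
    rw [octantIntegral_add p.continuous q.continuous, hp, hq, intervalIntegral.integral_add
      (p.continuous.intervalIntegrable _ _) (q.continuous.intervalIntegrable _ _), mul_add]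
  | monomial n a =>
    have hsep (θ φ : ℝ) :
        a * (sin φ * cos θ) ^ n * sin φ = a * cos θ ^ n * sin φ ^ (n + 1) := by ring
    simp only [octantIntegral, Polynomial.eval_monomial, hsep, intervalIntegral.integral_const_mul,
      intervalIntegral.integral_mul_const, integral_pow, integral_cos_pow_eq_integral_sin_pow]
    rw [mul_assoc, mul_comm (∫ x in (0 : ℝ)..(π / 2), sin x ^ n),
      integral_sin_pow_succ_mul_integral_sin_pow, one_pow, zero_pow n.succ_ne_zero]
    ring

theorem octantIntegral_eq_integral {f : ℝ → ℝ} (hf : Continuous f) :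
    octantIntegral f = π / 2 * ∫ x in (0 : ℝ)..1, f x := by
  refine eq_of_forall_dist_le fun ε hε => ?_
  obtain ⟨p, hp⟩ := exists_polynomial_near_of_continuousOn 0 1 f hf.continuousOn
    (ε / ((π / 2) ^ 2 + π / 2)) (by positivity)
  have hoctant := abs_octantIntegral_le fun x hx => (hp x hx).le
  have hinterval : |∫ x in (0 : ℝ)..1, (p.eval x - f x)| ≤ ε / ((π / 2) ^ 2 + π / 2) := by
    simpa using intervalIntegral.norm_integral_le_of_norm_le_const (a := 0) (b := 1)
      (f := fun x => p.eval x - f x) fun x hx =>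
        (hp x (Set.Ioc_subset_Icc_self (Set.uIoc_of_le (zero_le_one' ℝ) ▸ hx))).le
  rw [octantIntegral_sub p.continuous hf, octantIntegral_polynomial] at hoctant
  rw [intervalIntegral.integral_sub (p.continuous.intervalIntegrable _ _)
    (hf.intervalIntegrable _ _)] at hinterval
  calc dist (octantIntegral f) (π / 2 * ∫ x in (0 : ℝ)..1, f x)
      ≤ |π / 2 * (∫ x in (0 : ℝ)..1, p.eval x) - octantIntegral f| +
          |π / 2 * ((∫ x in (0 : ℝ)..1, p.eval x) - ∫ x in (0 : ℝ)..1, f x)| := by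
        rw [mul_sub, ← dist_eq, ← dist_eq]
        exact dist_triangle_left _ _ _
    _ ≤ ε / ((π / 2) ^ 2 + π / 2) * (π / 2) ^ 2 + π / 2 * (ε / ((π / 2) ^ 2 + π / 2)) := by
        rw [abs_mul, abs_of_pos (by positivity : 0 < π / 2)]
        gcongr
    _ = ε := by
        field_simp

theorem integral_zero_one_sqrt_one_sub_sq : ∫ x in (0 : ℝ)..1, √(1 - x ^ 2) = π / 4 := by
  calc ∫ x in (0 : ℝ)..1, √(1 - x ^ 2)
      = ∫ φ in (0 : ℝ)..(π / 2), √(1 - cos φ ^ 2) * sin φ := by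
        rw [integral_comp_cos_mul_sin (f := fun x => √(1 - x ^ 2)) (by fun_prop), cos_zero,
          cos_pi_div_two]
    _ = ∫ φ in (0 : ℝ)..(π / 2), sin φ ^ 2 :=
        intervalIntegral.integral_congr_Ioo_of_le (by positivity) fun φ hφ => by
          have hs : 0 < sin φ := sin_pos_of_mem_Ioo ⟨hφ.1, by linarith [hφ.2, pi_pos]⟩
          rw [← sin_sq, sqrt_sq hs.le, sq]
    _ = π / 4 := by
        rw [integral_sin_sq, sin_zero, cos_pi_div_two]
        ring

theorem integral_integral_sqrt_mul_sin :
    ∫ θ in (0 : ℝ)..(π / 2), ∫ φ in (0 : ℝ)..(π / 2),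
      √(sin θ ^ 2 * sin φ ^ 2 + cos φ ^ 2) * sin φ = π ^ 2 / 8 := by
  have hcoord (θ φ : ℝ) :
      sin θ ^ 2 * sin φ ^ 2 + cos φ ^ 2 = 1 - (sin φ * cos θ) ^ 2 := by
    rw [sin_sq θ, cos_sq' φ]
    ring
  simp only [hcoord]
  change octantIntegral (fun x => √(1 - x ^ 2)) = π ^ 2 / 8
  rw [octantIntegral_eq_integral (by fun_prop), integral_zero_one_sqrt_one_sub_sq]
  ring

theorem integral_sin_pow_four : ∫ x in (0 : ℝ)..(π / 2), sin x ^ 4 = 3 * π / 16 := by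
  rw [integral_sin_pow, integral_sin_sq, sin_zero, cos_pi_div_two]
  push_cast
  ring

/-- The joint moment `E(ar·mw)` of the surface area and mean width of the projection
of a unit 4-cube onto a uniformly random 3-subspace of `ℝ⁴` equals
`3(5 + 2G)/π + 9π/4`, where `G` is Catalan's constant. -/
theorem joint_moment_surface_area_mean_width_projection_4cube
    (G : ℝ) (hG : G = ∑' k : ℕ, (-1 : ℝ) ^ k / (2 * (k : ℝ) + 1) ^ 2) :
    (96 / π ^ 2) *
      (∫ θ in (0:ℝ)..(π/2), ∫ φ in (0:ℝ)..(π/2), ∫ ψ in (0:ℝ)..(π/2),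
        (Real.sqrt (Real.cos φ ^ 2 * Real.sin ψ ^ 2 + Real.cos ψ ^ 2)
          + Real.sin ψ *
            Real.sqrt (Real.sin θ ^ 2 * Real.sin φ ^ 2 + Real.cos φ ^ 2)) *
          Real.sin ψ * Real.sin φ * Real.sin ψ ^ 2)
    = 3 * (5 + 2 * G) / π + 9 * π / 4 := by
  have hsplit (θ φ ψ : ℝ) :
      (√(cos φ ^ 2 * sin ψ ^ 2 + cos ψ ^ 2) +
          sin ψ * √(sin θ ^ 2 * sin φ ^ 2 + cos φ ^ 2)) * sin ψ * sin φ * sin ψ ^ 2 =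
        √(cos φ ^ 2 * sin ψ ^ 2 + cos ψ ^ 2) * sin φ * sin ψ ^ 3 +
          √(sin θ ^ 2 * sin φ ^ 2 + cos φ ^ 2) * sin φ * sin ψ ^ 4 := by ring
  simp only [hsplit]
  rw [integral_integral_integral_add_mul
      (f := fun φ ψ => √(cos φ ^ 2 * sin ψ ^ 2 + cos ψ ^ 2) * sin φ * sin ψ ^ 3)
      (g := fun θ φ => √(sin θ ^ 2 * sin φ ^ 2 + cos φ ^ 2) * sin φ)
      (h := fun ψ => sin ψ ^ 4) (by fun_prop) (by fun_prop) (by fun_prop),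
    integral_integral_sqrt_mul_sin_mul_sin_pow_three, integral_integral_sqrt_mul_sin,
    integral_sin_pow_four, hG, ← catalanConstant]
  field_simp
  ring
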